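/- Let K be a field, n ≥ 2, with n invertible in K (char K = 0 or char K does not divide n), and let f(x_1,…,x_m) be a multilinear polynomial over K. Then f satisfies (S0) if and only if f satisfies both (S1) and (S2); in particular, f is a polynomial identity for M_n(K) if and only if f satisfies both (S1) and (S2). -/

import Mathlib

/-- Evaluation of the multilinear polynomial `f(x₁,…,x_m) = ∑_{σ ∈ S_m} α_σ x_{σ(1)}⋯x_{σ(m)}`
given by coefficients `α` at the tuple `a`. -/
def mlEval {K A : Type} [Field K] [Ring A] [Algebra K A] {m : ℕ}
    (α : Equiv.Perm (Fin m) → K) (a : Fin m → A) : A :=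
  ∑ σ : Equiv.Perm (Fin m), α σ • (List.ofFn fun i => a (σ i)).prod

/-- The image of the multilinear polynomial with coefficients `α` on the algebra `A`. -/
def mlImage {K A : Type} [Field K] [Ring A] [Algebra K A] {m : ℕ}
    (α : Equiv.Perm (Fin m) → K) : Set A :=
  Set.range (mlEval α)

/-- `a` is homogeneous of degree `g` in the Vasilovsky `ZMod n`-grading of `Mₙ(K)`:
`a` lies in the span of the matrix units `E i j` with `j - i ≡ g (mod n)`. -/
def VasHomog {K : Type} [Field K] {n : ℕ} (g : ZMod n)
    (a : Matrix (Fin n) (Fin n) K) : Prop :=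
  ∀ i j : Fin n, ((j.val : ZMod n) - (i.val : ZMod n)) ≠ g → a i j = 0

/-- Statement (S0): `f` vanishes on homogeneous tuples whose degrees sum to `0`. -/
def StmtS0 {K : Type} [Field K] (n : ℕ) {m : ℕ} (α : Equiv.Perm (Fin m) → K) : Prop :=
  ∀ (g : Fin m → ZMod n) (a : Fin m → Matrix (Fin n) (Fin n) K),
    (∀ i, VasHomog (g i) (a i)) → (∑ i, g i) = 0 → mlEval α a = 0

/-- Statement (S1): `f` vanishes on homogeneous tuples whose degrees sum to a nonzero element. -/
def StmtS1 {K : Type} [Field K] (n : ℕ) {m : ℕ} (α : Equiv.Perm (Fin m) → K) : Prop :=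
  ∀ (g : Fin m → ZMod n) (a : Fin m → Matrix (Fin n) (Fin n) K),
    (∀ i, VasHomog (g i) (a i)) → (∑ i, g i) ≠ 0 → mlEval α a = 0

/-- Statement (S2): `f` has trace-zero values on homogeneous tuples whose degrees sum to `0`. -/
def StmtS2 {K : Type} [Field K] (n : ℕ) {m : ℕ} (α : Equiv.Perm (Fin m) → K) : Prop :=
  ∀ (g : Fin m → ZMod n) (a : Fin m → Matrix (Fin n) (Fin n) K),
    (∀ i, VasHomog (g i) (a i)) → (∑ i, g i) = 0 → Matrix.trace (mlEval α a) = 0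

/-- The set of scalar matrices in `Mₙ(K)`. -/
def scalarSet (K : Type) [Field K] (n : ℕ) : Set (Matrix (Fin n) (Fin n) K) :=
  {b | ∃ c : K, b = c • (1 : Matrix (Fin n) (Fin n) K)}

/-- The set `slₙ(K)` of trace-zero matrices in `Mₙ(K)`. -/
def slSet (K : Type) [Field K] (n : ℕ) : Set (Matrix (Fin n) (Fin n) K) :=
  {b | Matrix.trace b = 0}

theorem aux_prod_comm {A : Type} [Ring A] (b : A) : ∀ {m : ℕ} (a : Fin m → A),
    (List.ofFn a).prod * b - b * (List.ofFn a).prod =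
      ∑ i, (List.ofFn (Function.update a i (a i * b - b * a i))).prod := by
  intro m
  induction m with
  | zero => intro a; simp
  | succ m ih =>
    intro a
    have h := ih (fun i => a i.succ)
    have h1 : ∀ x, (fun i : Fin m => Function.update a 0 x i.succ) = fun i => a i.succ := by
      intro x; funext i; simp [Function.update_of_ne]
    have h2 : ∀ (j : Fin m) x, (fun i : Fin m => Function.update a j.succ x i.succ) =
        Function.update (fun i => a i.succ) j x := by
      intro j x; funext i
      by_cases hij : i = j
      · subst hij; simp
      · rw [Function.update_of_ne hij, Function.update_of_ne (by simpa using hij)]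
    have h3 : ∀ (j : Fin m) x, Function.update a j.succ x 0 = a 0 := by
      intro j x; exact Function.update_of_ne (Fin.succ_ne_zero j).symm _ _
    simp only [List.ofFn_succ, List.prod_cons, Fin.sum_univ_succ, h1, h2, h3,
      Function.update_self, ← Finset.mul_sum, ← h]
    noncomm_ring

theorem aux_eval_comm {K A : Type} [Field K] [Ring A] [Algebra K A] {m : ℕ}
    (α : Equiv.Perm (Fin m) → K) (a : Fin m → A) (b : A) :
    mlEval α a * b - b * mlEval α a =
      ∑ i, mlEval α (Function.update a i (a i * b - b * a i)) := by
  unfold mlEval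
  rw [Finset.sum_comm, Finset.sum_mul, Finset.mul_sum, ← Finset.sum_sub_distrib]
  refine Finset.sum_congr rfl fun σ _ => ?_
  rw [smul_mul_assoc, mul_smul_comm, ← smul_sub, aux_prod_comm, ← Finset.smul_sum]
  congr 1
  symm
  rw [← Equiv.sum_comp σ]
  refine Finset.sum_congr rfl fun i _ => ?_
  congr 2
  funext j
  by_cases hij : j = i
  · subst hij; simp
  · rw [Function.update_of_ne hij, Function.update_of_ne (by simpa using hij)]

theorem aux_homog_mul {K : Type} [Field K] {n : ℕ} {g h : ZMod n}
    {a b : Matrix (Fin n) (Fin n) K} (ha : VasHomog g a) (hb : VasHomog h b) :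
    VasHomog (g + h) (a * b) := by
  intro i j hij
  rw [Matrix.mul_apply]
  refine Finset.sum_eq_zero fun k _ => ?_
  by_cases h1 : ((k.val : ZMod n) - (i.val : ZMod n)) = g
  · rw [hb k j, mul_zero]
    intro h2
    apply hij
    rw [← h1, ← h2]; ring
  · rw [ha i k h1, zero_mul]

theorem aux_homog_sub {K : Type} [Field K] {n : ℕ} {g : ZMod n}
    {a b : Matrix (Fin n) (Fin n) K} (ha : VasHomog g a) (hb : VasHomog g b) :
    VasHomog g (a - b) := by
  intro i j hij
  rw [Matrix.sub_apply, ha i j hij, hb i j hij, sub_zero]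

theorem aux_homog_prod {K : Type} [Field K] {n : ℕ} : ∀ {m : ℕ} (g : Fin m → ZMod n)
    (a : Fin m → Matrix (Fin n) (Fin n) K), (∀ i, VasHomog (g i) (a i)) →
    VasHomog (∑ i, g i) (List.ofFn a).prod := by
  intro m
  induction m with
  | zero =>
    intro g a _ i j hij
    have : i ≠ j := by rintro rfl; simp at hij
    simp [this]
  | succ m ih =>
    intro g a h
    rw [List.ofFn_succ, List.prod_cons, Fin.sum_univ_succ]
    exact aux_homog_mul (h 0) (ih _ _ fun i => h i.succ)

theorem aux_homog_eval {K : Type} [Field K] {n m : ℕ} (α : Equiv.Perm (Fin m) → K)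
    (g : Fin m → ZMod n) (a : Fin m → Matrix (Fin n) (Fin n) K)
    (h : ∀ i, VasHomog (g i) (a i)) : VasHomog (∑ i, g i) (mlEval α a) := by
  intro i j hij
  unfold mlEval
  rw [Matrix.sum_apply]
  refine Finset.sum_eq_zero fun σ _ => ?_
  rw [Matrix.smul_apply, aux_homog_prod (fun i => g (σ i)) (fun i => a (σ i)) (fun i => h _) i j,
    smul_zero]
  rwa [Equiv.sum_comp σ g]

theorem aux_homog_single {K : Type} [Field K] {n : ℕ} (i j : Fin n) (c : K) :
    VasHomog ((j.val : ZMod n) - (i.val : ZMod n)) (Matrix.single i j c) := by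
  intro k l hkl
  apply Matrix.single_apply_of_ne
  rintro ⟨rfl, rfl⟩
  exact hkl rfl

theorem aux_commute {K : Type} [Field K] {n m : ℕ} (α : Equiv.Perm (Fin m) → K)
    (g : Fin m → ZMod n) (a : Fin m → Matrix (Fin n) (Fin n) K)
    (h : ∀ i, VasHomog (g i) (a i)) (d : ZMod n) (b : Matrix (Fin n) (Fin n) K)
    (hb : VasHomog d b)
    (H : ∀ (g' : Fin m → ZMod n) (a' : Fin m → Matrix (Fin n) (Fin n) K),
      (∀ i, VasHomog (g' i) (a' i)) → (∑ i, g' i) = (∑ i, g i) + d → mlEval α a' = 0) :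
    mlEval α a * b = b * mlEval α a := by
  rw [← sub_eq_zero, aux_eval_comm]
  refine Finset.sum_eq_zero fun i _ => ?_
  apply H (Function.update g i (g i + d))
  · intro j
    by_cases hij : j = i
    · subst hij
      simp only [Function.update_self]
      refine aux_homog_sub (aux_homog_mul (h j) hb) ?_
      rw [add_comm]
      exact aux_homog_mul hb (h j)
    · rw [Function.update_of_ne hij, Function.update_of_ne hij]; exact h j
  · rw [Finset.sum_update_of_mem (Finset.mem_univ i),
      ← Finset.sum_sdiff (Finset.subset_univ {i}) (f := g), Finset.sum_singleton]
    ring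

theorem aux_cast_ne {n : ℕ} {i j : Fin n} (hij : i ≠ j) :
    ((j.val : ZMod n) - (i.val : ZMod n)) ≠ 0 := by
  intro h
  rw [sub_eq_zero, ZMod.natCast_eq_natCast_iff', Nat.mod_eq_of_lt i.2, Nat.mod_eq_of_lt j.2] at h
  exact hij (Fin.ext h.symm)

theorem aux_S0_S1 {K : Type} [Field K] (n : ℕ) {m : ℕ} (α : Equiv.Perm (Fin m) → K)
    (h0 : StmtS0 n α) : StmtS1 n α := by
  intro g a ha hg
  ext i j
  by_cases hij : ((j.val : ZMod n) - (i.val : ZMod n)) = ∑ i, g i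
  · have hne : i ≠ j := by
      rintro rfl
      exact hg (by rw [← hij, sub_self])
    have := aux_commute α g a ha _ (Matrix.single j i 1) (aux_homog_single j i 1)
      (fun g' a' h' hs => h0 g' a' h' (by rw [hs, ← hij]; ring))
    have h2 := congrFun (congrFun this i) i
    rw [Matrix.mul_single_apply_same, Matrix.single_mul_apply_of_ne _ _ _ _ _ hne] at h2
    simpa using h2
  · exact aux_homog_eval α g a ha i j hij

theorem aux_S12_S0 {K : Type} [Field K] (n : ℕ) (hchar : (n : K) ≠ 0) {m : ℕ}
    (α : Equiv.Perm (Fin m) → K) (h1 : StmtS1 n α) (h2 : StmtS2 n α) : StmtS0 n α := by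
  intro g a ha hg
  obtain ⟨c, hc⟩ := Matrix.mem_range_scalar_of_commute_single (M := mlEval α a) (by
    intro i j hij
    exact (aux_commute α g a ha _ (Matrix.single i j 1) (aux_homog_single i j 1)
      (fun g' a' h' hs => h1 g' a' h' (by
        rw [hs, hg, zero_add]; exact aux_cast_ne hij))).symm)
  have ht := h2 g a ha hg
  rw [← hc] at ht ⊢
  have : c = 0 := by
    simpa [Matrix.trace, hchar] using ht
  simp [this]

theorem aux_PI {K : Type} [Field K] (n : ℕ) {m : ℕ}
    (α : Equiv.Perm (Fin m) → K) (h0 : StmtS0 n α) (h1 : StmtS1 n α)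
    (a : Fin m → Matrix (Fin n) (Fin n) K) : mlEval α a = 0 := by
  let F : MultilinearMap K (fun _ : Fin m => Matrix (Fin n) (Fin n) K)
      (Matrix (Fin n) (Fin n) K) :=
    ∑ σ : Equiv.Perm (Fin m),
      α σ • (MultilinearMap.mkPiAlgebraFin K m (Matrix (Fin n) (Fin n) K)).domDomCongr σ
  have hF : ∀ x, F x = mlEval α x := by
    intro x
    simp [F, mlEval]
  have hz : F = 0 := by
    refine Module.Basis.ext_multilinear (fun _ => Matrix.stdBasis K (Fin n) (Fin n)) ?_
    intro v
    rw [hF, MultilinearMap.zero_apply]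
    have hh : ∀ i, VasHomog (((v i).2.val : ZMod n) - ((v i).1.val : ZMod n))
        (Matrix.stdBasis K (Fin n) (Fin n) (v i)) := by
      intro i
      rw [show v i = ((v i).1, (v i).2) from rfl, Matrix.stdBasis_eq_single]
      exact aux_homog_single _ _ _
    by_cases hs : ∑ i, (((v i).2.val : ZMod n) - ((v i).1.val : ZMod n)) = 0
    · exact h0 _ _ hh hs
    · exact h1 _ _ hh hs
  rw [← hF, hz, MultilinearMap.zero_apply]

/-- when `n` is invertible in `K`, (S0) is equivalent to (S1) ∧ (S2); in particular,
`f` is a polynomial identity for `Mₙ(K)` iff `f` satisfies both (S1) and (S2). -/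
theorem stmt_4 {K : Type} [Field K] (n : ℕ) (hn : 2 ≤ n) (hchar : (n : K) ≠ 0) {m : ℕ}
    (α : Equiv.Perm (Fin m) → K) :
    (StmtS0 n α ↔ StmtS1 n α ∧ StmtS2 n α) ∧
      ((∀ a : Fin m → Matrix (Fin n) (Fin n) K, mlEval α a = 0) ↔
        StmtS1 n α ∧ StmtS2 n α) := by
  have key : StmtS0 n α ↔ StmtS1 n α ∧ StmtS2 n α :=
    ⟨fun h => ⟨aux_S0_S1 n α h, fun g a ha hg => by rw [h g a ha hg, Matrix.trace_zero]⟩,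
      fun h => aux_S12_S0 n hchar α h.1 h.2⟩
  refine ⟨key, fun h => ⟨fun g a _ _ => h a, fun g a _ _ => by rw [h a, Matrix.trace_zero]⟩,
    fun h => aux_PI n α (key.2 h) h.1⟩
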